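/- Let T be the (q+1)-regular tree with q ≥ 2, ∞ a fixed end, M the group of automorphisms of T fixing ∞ that have a fixed vertex (the 'centralizer' of the end), o a vertex on a geodesic ray toward ∞, with the ray's vertices o = v_0, v_1, v_2, … going toward ∞. For n ≥ 1 let M_n be the set of elements of M fixing v_n but not v_{n−1}, and M_0 the stabilizer of o in M. Then each M_n is a single M₀-double coset, M is the disjoint union of the M_n for n ≥ 0, M_n⁻¹ = M_n, and the number of left M₀-cosets in M_n equals (q−1)q^{n−1} for n ≥ 1. -/

import Mathlib

/-- A permutation of the vertices is an automorphism of the graph `G`. -/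
def IsAut {V : Type*} (G : SimpleGraph V) (g : Equiv.Perm V) : Prop :=
  ∀ a b : V, G.Adj (g a) (g b) ↔ G.Adj a b

/-- The centralizer `M` of the end `∞` determined by the ray `v 0, v 1, v 2, …`:
automorphisms fixing the end and having a fixed vertex; equivalently, automorphisms
fixing all but finitely many vertices of the ray. -/
def Mend {V : Type*} (G : SimpleGraph V) (v : ℕ → V) : Set (Equiv.Perm V) :=
  {g | IsAut G g ∧ ∃ N : ℕ, ∀ n : ℕ, N ≤ n → g (v n) = v n}

/-- `Mset G v 0` is the stabilizer `M₀` of `o = v 0` in `M`; for `n ≥ 1`, `Mset G v n`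
is the set of elements of `M` fixing `v n` but not `v (n-1)`. -/
def Mset {V : Type*} (G : SimpleGraph V) (v : ℕ → V) : ℕ → Set (Equiv.Perm V)
  | 0 => {g | g ∈ Mend G v ∧ g (v 0) = v 0}
  | n + 1 => {g | g ∈ Mend G v ∧ g (v (n + 1)) = v (n + 1) ∧ g (v n) ≠ v n}

/-!
The Busemann function of the end orients every edge of the tree, so each vertex has a unique
parent, its neighbour towards the end, and `M` consists of the permutations that commute with
the parent map and fix some vertex of the ray. Such a permutation `g` fixes a final segment of the
ray, and it lies in `M_n` exactly when the paths from `o` and `g o` towards the end first meet at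
`v n`. For `n ≥ 1` the number of such vertices `g o` is `q ^ n - q ^ (n - 1)`.

Labelling the `q` children of every vertex identifies the subtrees below any two siblings.
Exchanging such subtrees, one level after the other, moves a vertex to any other vertex with the
same `n`-th ancestor, and it fixes `o` if the paths from the two vertices first meet that of `o`
at `v n`. Thus `M₀` is transitive on the possible values of `g o`, and the left cosets of `M₀`
correspond to these values.
-/

open Filter Function

section Automorphisms

variable {V W : Type*} {G : SimpleGraph V} {H : SimpleGraph W}

theorem dist_hom_le (hG : G.Connected) (f : G →g H) (a b : V) :
    H.dist (f a) (f b) ≤ G.dist a b := by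
  obtain ⟨P, hP⟩ := hG.exists_walk_length_eq_dist a b
  simpa only [SimpleGraph.Walk.length_map, hP] using SimpleGraph.dist_le (P.map f)

theorem dist_iso (hG : G.Connected) (f : G ≃g H) (a b : V) : H.dist (f a) (f b) = G.dist a b :=
  (dist_hom_le hG f.toHom a b).antisymm <| by
    simpa using dist_hom_le (f.connected_iff.1 hG) f.symm.toHom (f a) (f b)

/-- The set `Mend G v` as a subgroup of the group of all permutations of the vertices. -/
def endCentralizer (G : SimpleGraph V) (v : ℕ → V) : Subgroup (Equiv.Perm V) where
  carrier := Mend G v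
  one_mem' := ⟨fun _ _ => Iff.rfl, 0, fun _ _ => rfl⟩
  mul_mem' := by
    rintro a b ⟨ha, K, hK⟩ ⟨hb, L, hL⟩
    refine ⟨fun x y => (ha _ _).trans (hb x y), K ⊔ L, fun n hn => ?_⟩
    rw [Equiv.Perm.mul_apply, hL n (le_of_max_le_right hn), hK n (le_of_max_le_left hn)]
  inv_mem' := by
    rintro a ⟨ha, K, hK⟩
    refine ⟨fun x y => ?_, K, fun n hn => Equiv.Perm.inv_eq_iff_eq.2 (hK n hn).symm⟩
    simpa using (ha (a⁻¹ x) (a⁻¹ y)).symm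

theorem Mset_subset_Mend (G : SimpleGraph V) (v : ℕ → V) (n : ℕ) : Mset G v n ⊆ Mend G v := by
  cases n <;> exact fun _ hg => hg.1

theorem inv_mem_Mset {v : ℕ → V} {n : ℕ} {g : Equiv.Perm V} (hg : g ∈ Mset G v n) :
    g⁻¹ ∈ Mset G v n := by
  have hinv : g⁻¹ ∈ Mend G v := (endCentralizer G v).inv_mem (Mset_subset_Mend G v n hg)
  have hfix (k : ℕ) : g⁻¹ (v k) = v k ↔ g (v k) = v k := Equiv.Perm.inv_eq_iff_eq.trans eq_comm
  cases n with
  | zero => exact ⟨hinv, (hfix 0).2 hg.2⟩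
  | succ n => exact ⟨hinv, (hfix _).2 hg.2.1, (hfix n).not.2 hg.2.2⟩

theorem inv_Mset (G : SimpleGraph V) (v : ℕ → V) (n : ℕ) : (Mset G v n)⁻¹ = Mset G v n :=
  Set.Subset.antisymm (fun g hg => inv_inv g ▸ inv_mem_Mset hg) fun _ hg => inv_mem_Mset hg

end Automorphisms

section Busemann

variable {V : Type*} {G : SimpleGraph V} {v : ℕ → V}

/-- A sequence of vertices that is an isometric embedding of `ℕ`. -/
def IsGeodesicRay (G : SimpleGraph V) (v : ℕ → V) : Prop :=
  ∀ m n : ℕ, G.dist (v m) (v (m + n)) = n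

/-- The Busemann function of the end of the ray `v`, normalized to vanish at `v 0` and to increase
towards the end. Along a geodesic ray the supremum is the limit of an eventually constant
sequence. -/
noncomputable def busemann (G : SimpleGraph V) (v : ℕ → V) (u : V) : ℤ :=
  ⨆ n : ℕ, ((n : ℤ) - G.dist u (v n))

theorem monotone_sub_dist_ray (hG : G.Connected) (hv : IsGeodesicRay G v) (u : V) :
    Monotone fun n : ℕ => (n : ℤ) - G.dist u (v n) := by
  refine monotone_nat_of_le_succ fun n => ?_
  have htri := hG.dist_triangle (u := u) (v := v n) (w := v (n + 1))
  have hstep := hv n 1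
  lia

theorem bddAbove_sub_dist_ray (hG : G.Connected) (hv : IsGeodesicRay G v) (u : V) :
    BddAbove (Set.range fun n : ℕ => (n : ℤ) - G.dist u (v n)) := by
  refine ⟨G.dist (v 0) u, Set.forall_mem_range.2 fun n => ?_⟩
  have htri := hG.dist_triangle (u := v 0) (v := u) (w := v n)
  have hray : G.dist (v 0) (v n) = n := by simpa using hv 0 n
  lia

theorem sub_dist_le_busemann (hG : G.Connected) (hv : IsGeodesicRay G v) (u : V) (n : ℕ) :
    (n : ℤ) - G.dist u (v n) ≤ busemann G v u :=
  le_ciSup (bddAbove_sub_dist_ray hG hv u) n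

theorem eventually_busemann_eq (hG : G.Connected) (hv : IsGeodesicRay G v) (u : V) :
    ∀ᶠ n : ℕ in atTop, busemann G v u = n - G.dist u (v n) := by
  have hlim := tendsto_atTop_ciSup (monotone_sub_dist_ray hG hv u) (bddAbove_sub_dist_ray hG hv u)
  rw [nhds_discrete, tendsto_pure] at hlim
  exact hlim.mono fun _ => Eq.symm

theorem busemann_ray (hG : G.Connected) (hv : IsGeodesicRay G v) (m : ℕ) :
    busemann G v (v m) = m := by
  obtain ⟨n, hn, hmn⟩ :=
    ((eventually_busemann_eq hG hv (v m)).and (eventually_ge_atTop m)).exists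
  obtain ⟨k, rfl⟩ := Nat.exists_eq_add_of_le hmn
  rw [hn, hv m k]
  lia

theorem busemann_apply_of_mem_Mend (hG : G.Connected) (hv : IsGeodesicRay G v)
    {g : Equiv.Perm V} (hg : g ∈ Mend G v) (u : V) : busemann G v (g u) = busemann G v u := by
  obtain ⟨hAut, hfix⟩ := hg
  obtain ⟨n, hgu, hu, hn⟩ := ((eventually_busemann_eq hG hv (g u)).and
    ((eventually_busemann_eq hG hv u).and (eventually_atTop.2 hfix))).exists
  have hdist := dist_iso hG (⟨g, hAut _ _⟩ : G ≃g G) u (v n)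
  simp only [RelIso.coe_fn_mk, hn] at hdist
  rw [hgu, hu, hdist]

end Busemann

section Tree

variable {V : Type*} {G : SimpleGraph V} {v : ℕ → V}

theorem eq_of_adj_of_dist_eq_dist_add_one (hG : G.IsTree) {r u w w' : V}
    (hw : G.Adj u w) (hw' : G.Adj u w')
    (hd : G.dist u r = G.dist w r + 1) (hd' : G.dist u r = G.dist w' r + 1) : w = w' := by
  have key {x : V} (hx : G.Adj u x) (hdx : G.dist u r = G.dist x r + 1) :
      ∃ P : G.Path u r, P.1.snd = x := by
    obtain ⟨P, hP⟩ := hG.connected.exists_walk_length_eq_dist x r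
    exact ⟨⟨.cons hx P, SimpleGraph.Walk.isPath_of_length_eq_dist _ (by simp [hP, hdx])⟩, by simp⟩
  obtain ⟨P, rfl⟩ := key hw hd
  obtain ⟨P', rfl⟩ := key hw' hd'
  rw [(hG.isAcyclic.subsingleton_path u r).elim P P']

theorem isGeodesicRay_of_injective (hG : G.IsTree) (hinj : Injective v)
    (hadj : ∀ n : ℕ, G.Adj (v n) (v (n + 1))) : IsGeodesicRay G v := by
  intro m n
  induction n using Nat.twoStepInduction with
  | zero => exact SimpleGraph.dist_self
  | one => exact SimpleGraph.dist_eq_one_iff_adj.2 (hadj m)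
  | more n ih ih' =>
    rw [← add_assoc] at ih'
    rcases hG.dist_eq_dist_add_one_of_adj (v m) (hadj (m + n + 1)) with hback | hforth
    · have hturn : v (m + n) = v (m + n + 1 + 1) :=
        eq_of_adj_of_dist_eq_dist_add_one hG (r := v m) (hadj (m + n)).symm (hadj (m + n + 1))
          (by simp only [G.dist_comm (v := v m), ih, ih'])
          (by simp only [G.dist_comm (v := v m), hback])
      have := hinj hturn
      lia
    · exact hforth.trans (by rw [ih'])

theorem busemann_eq_add_one_or_of_adj (hG : G.IsTree) (hv : IsGeodesicRay G v) {u w : V}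
    (huw : G.Adj u w) :
    busemann G v w = busemann G v u + 1 ∨ busemann G v u = busemann G v w + 1 := by
  obtain ⟨n, hu, hw⟩ := ((eventually_busemann_eq hG.connected hv u).and
    (eventually_busemann_eq hG.connected hv w)).exists
  have hdist := hG.dist_eq_dist_add_one_of_adj (v n) huw
  rw [G.dist_comm, G.dist_comm (u := v n)] at hdist
  lia

theorem eq_of_adj_of_busemann_eq_add_one (hG : G.IsTree) (hv : IsGeodesicRay G v) {u w w' : V}
    (hw : G.Adj u w) (hw' : G.Adj u w') (hb : busemann G v w = busemann G v u + 1)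
    (hb' : busemann G v w' = busemann G v u + 1) : w = w' := by
  have hlim := eventually_busemann_eq hG.connected hv
  obtain ⟨n, hnu, hnw, hnw'⟩ := ((hlim u).and ((hlim w).and (hlim w'))).exists
  exact eq_of_adj_of_dist_eq_dist_add_one hG (r := v n) hw hw' (by lia) (by lia)

theorem exists_adj_busemann_eq_add_one (hG : G.IsTree) (hv : IsGeodesicRay G v) (u : V) :
    ∃ w, G.Adj u w ∧ busemann G v w = busemann G v u + 1 := by
  obtain ⟨n, hu, hn⟩ := ((eventually_busemann_eq hG.connected hv u).and
    (eventually_gt_atTop (busemann G v u).toNat)).exists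
  obtain ⟨P, hP⟩ := hG.connected.exists_walk_length_eq_dist u (v n)
  cases P with
  | nil =>
    rw [SimpleGraph.dist_self] at hu
    lia
  | @cons _ w _ huw P =>
    refine ⟨w, huw, (busemann_eq_add_one_or_of_adj hG hv huw).resolve_right fun hdown => ?_⟩
    have hle := sub_dist_le_busemann hG.connected hv w n
    have hPw := SimpleGraph.dist_le P
    rw [SimpleGraph.Walk.length_cons] at hP
    lia

/-- `p` moves every vertex one edge towards the end of the ray `v`, and `h` is a height function
for this orientation which is invariant under the centralizer of the end. -/
structure IsParentMap (G : SimpleGraph V) (v : ℕ → V) (p : V → V) (h : V → ℤ) : Prop where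
  adj_iff (a b : V) : G.Adj a b ↔ p a = b ∨ p b = a
  height_parent (u : V) : h (p u) = h u + 1
  parent_ray (n : ℕ) : p (v n) = v (n + 1)
  height_apply {g : Equiv.Perm V} : g ∈ Mend G v → ∀ u, h (g u) = h u

theorem exists_isParentMap_busemann (hG : G.IsTree) (hinj : Injective v)
    (hadj : ∀ n : ℕ, G.Adj (v n) (v (n + 1))) : ∃ p, IsParentMap G v p (busemann G v) := by
  have hv := isGeodesicRay_of_injective hG hinj hadj
  choose p hp hheight using exists_adj_busemann_eq_add_one hG hv
  have parent_eq {a b : V} (hab : G.Adj a b) (hb : busemann G v b = busemann G v a + 1) :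
      p a = b := eq_of_adj_of_busemann_eq_add_one hG hv (hp a) hab (hheight a) hb
  refine ⟨p, fun a b => ⟨fun hab => ?_, ?_⟩, hheight, fun n => parent_eq (hadj n) ?_,
    busemann_apply_of_mem_Mend hG.connected hv⟩
  · exact (busemann_eq_add_one_or_of_adj hG hv hab).imp (parent_eq hab) (parent_eq hab.symm)
  · rintro (rfl | rfl)
    exacts [hp a, (hp b).symm]
  · simp only [busemann_ray hG.connected hv, Nat.cast_add, Nat.cast_one]

end Tree

section Labelling

variable {V ι : Type*} {p : V → V} {h : V → ℤ} {e : V × ι ≃ V}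

theorem height_iterate (hh : ∀ u, h (p u) = h u + 1) (k : ℕ) (u : V) :
    h (p^[k] u) = h u + k := by
  simpa using Semiconj.iterate_right (f := h) (gb := (· + 1)) hh k u

theorem exists_equiv_prod_of_fiber_equiv (hf : ∀ u, Nonempty ({w // p w = u} ≃ ι)) :
    ∃ e : V × ι ≃ V, ∀ x, p (e x) = x.1 :=
  let f u := (hf u).some.symm
  ⟨(Equiv.sigmaEquivProd V ι).symm.trans
    ((Equiv.sigmaCongrRight f).trans (Equiv.sigmaFiberEquiv p)), fun x => (f x.1 x.2).2⟩

theorem iterate_fiber_succ (he : ∀ x, p (e x) = x.1) (k : ℕ) (z : V) :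
    p^[k + 1] ⁻¹' {z} = e '' ((p^[k] ⁻¹' {z}) ×ˢ Set.univ) := by
  ext w
  obtain ⟨x, rfl⟩ := e.surjective w
  simp [he]

theorem finite_iterate_fiber [Finite ι] (he : ∀ x, p (e x) = x.1) (k : ℕ) (z : V) :
    (p^[k] ⁻¹' {z}).Finite := by
  induction k with
  | zero => exact Set.finite_singleton z
  | succ k ih =>
    rw [iterate_fiber_succ he]
    exact (ih.prod Set.finite_univ).image e

theorem ncard_iterate_fiber (he : ∀ x, p (e x) = x.1) (k : ℕ) (z : V) :
    (p^[k] ⁻¹' {z}).ncard = Nat.card ι ^ k := by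
  induction k with
  | zero => simp
  | succ k ih =>
    rw [iterate_fiber_succ he, Set.ncard_image_of_injective _ e.injective, Set.ncard_prod, ih,
      Set.ncard_univ, pow_succ]

/-- The descendant of `x` reached by following a word of labels, where `e (u, i)` is the `i`-th
child of `u`. The last letter of the word is the first step down from `x`, so that removing the
head is passing to the parent. -/
def descend (e : V × ι ≃ V) (x : V) : List ι → V
  | [] => x
  | i :: l => e (descend e x l, i)

theorem iterate_length_descend (he : ∀ x, p (e x) = x.1) (x : V) (l : List ι) :
    p^[l.length] (descend e x l) = x := by
  induction l with
  | nil => rfl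
  | cons i l ih => rw [List.length_cons, iterate_succ_apply, descend, he, ih]

theorem descend_inj (hh : ∀ u, h (p u) = h u + 1) (he : ∀ x, p (e x) = x.1) {x y : V}
    (hxy : h x = h y) {l m : List ι} : descend e x l = descend e y m ↔ x = y ∧ l = m := by
  refine ⟨fun hlm => ?_, by rintro ⟨rfl, rfl⟩; rfl⟩
  have hlen : l.length = m.length := by
    have hl := height_iterate hh l.length (descend e x l)
    have hm := height_iterate hh m.length (descend e y m)
    rw [iterate_length_descend he] at hl hm
    rw [hlm] at hl
    lia
  induction l generalizing m with
  | nil =>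
    obtain rfl := List.length_eq_zero_iff.1 hlen.symm
    exact ⟨hlm, rfl⟩
  | cons i l ih =>
    obtain ⟨j, m, rfl⟩ := List.exists_cons_of_length_eq_add_one hlen.symm
    obtain ⟨hlm', rfl⟩ := Prod.mk.inj (e.injective hlm)
    obtain ⟨rfl, rfl⟩ := ih hlm' (Nat.succ.inj hlen)
    exact ⟨rfl, rfl⟩

theorem sumElim_descend_injective (hh : ∀ u, h (p u) = h u + 1) (he : ∀ x, p (e x) = x.1)
    {x y : V} (hxy : h x = h y) (hne : x ≠ y) :
    Injective (Sum.elim (descend e x) (descend e y)) :=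
  Injective.sumElim (fun _ _ heq => ((descend_inj hh he rfl).1 heq).2)
    (fun _ _ heq => ((descend_inj hh he rfl).1 heq).2)
    fun _ _ heq => hne ((descend_inj hh he hxy).1 heq).1

theorem mem_range_descend_of_parent_mem (he : ∀ x, p (e x) = x.1) {u x : V}
    (hu : p u ∈ Set.range (descend e x)) : u ∈ Set.range (descend e x) := by
  obtain ⟨⟨a, i⟩, rfl⟩ := e.surjective u
  obtain ⟨l, hl⟩ := hu
  exact ⟨i :: l, by rw [descend, hl, he]⟩

theorem parent_notMem_range_descend (hh : ∀ u, h (p u) = h u + 1) (he : ∀ x, p (e x) = x.1)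
    {x y : V} (hxy : h x = h y) : p x ∉ Set.range (descend e y) := by
  rintro ⟨l, hl⟩
  have hy := height_iterate hh l.length (descend e y l)
  rw [iterate_length_descend he, hl, hh] at hy
  lia

/-- The words of labels parametrize the subtrees below two distinct siblings by disjoint embeddings,
and exchanging them is an automorphism because the common parent is fixed. -/
theorem exists_commute_swap_siblings (hh : ∀ u, h (p u) = h u + 1) (he : ∀ x, p (e x) = x.1)
    {x y : V} (hxy : p x = p y) :
    ∃ σ : Equiv.Perm V, Function.Commute σ p ∧ σ x = y ∧
      ∀ u, u ∉ Set.range (descend e x) → u ∉ Set.range (descend e y) → σ u = u := by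
  obtain rfl | hne := eq_or_ne x y
  · exact ⟨1, fun _ => rfl, rfl, fun _ _ _ => rfl⟩
  have hheight : h x = h y := by
    have := congrArg h hxy
    rwa [hh, hh, add_left_inj] at this
  let φ : List ι ⊕ List ι ↪ V := ⟨_, sumElim_descend_injective hh he hheight hne⟩
  let σ : Equiv.Perm V := Equiv.Perm.viaEmbedding (Equiv.sumComm _ _) φ
  have hσx (l : List ι) : σ (descend e x l) = descend e y l :=
    Equiv.Perm.viaEmbedding_apply _ φ (Sum.inl l)
  have hσy (l : List ι) : σ (descend e y l) = descend e x l :=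
    Equiv.Perm.viaEmbedding_apply _ φ (Sum.inr l)
  have hσ (u : V) (hux : u ∉ Set.range (descend e x)) (huy : u ∉ Set.range (descend e y)) :
      σ u = u := by
    refine Equiv.Perm.viaEmbedding_apply_of_notMem _ φ u ?_
    rintro ⟨l | l, rfl⟩
    exacts [hux ⟨l, rfl⟩, huy ⟨l, rfl⟩]
  have hparent : σ (p x) = p x := hσ _ (parent_notMem_range_descend hh he rfl)
    (parent_notMem_range_descend hh he hheight)
  refine ⟨σ, fun u => ?_, hσx [], hσ⟩
  by_cases hux : u ∈ Set.range (descend e x)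
  · obtain ⟨_ | ⟨i, l⟩, rfl⟩ := hux
    · rw [hσx, descend, descend, hparent, hxy]
    · rw [hσx, descend, descend, he, he, hσx]
  by_cases huy : u ∈ Set.range (descend e y)
  · obtain ⟨_ | ⟨i, l⟩, rfl⟩ := huy
    · rw [hσy, descend, descend, ← hxy, hparent]
    · rw [hσy, descend, descend, he, he, hσy]
  rw [hσ u hux huy, hσ _ (mt (mem_range_descend_of_parent_mem he) hux)
    (mt (mem_range_descend_of_parent_mem he) huy)]

theorem exists_commute_map_eq (hh : ∀ u, h (p u) = h u + 1) (he : ∀ x, p (e x) = x.1)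
    {k : ℕ} {w w' : V} (hw : p^[k] w = p^[k] w') :
    ∃ a : Equiv.Perm V, Function.Commute a p ∧ a w = w' ∧
      ∀ u, (∀ m < k, ∀ j, p^[j] u ≠ p^[m] w ∧ p^[j] u ≠ p^[m] w') → a u = u := by
  induction k generalizing w w' with
  | zero => exact ⟨1, fun _ => rfl, hw, fun _ _ => rfl⟩
  | succ k ih =>
    obtain ⟨a, hap, haw, hafix⟩ := ih (w := p w) (w' := p w') hw
    obtain ⟨σ, hσp, hσw, hσfix⟩ :=
      exists_commute_swap_siblings hh he (x := a w) (y := w') (by rw [← hap, haw])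
    refine ⟨σ * a, hσp.comp_left hap, hσw, fun u hu => ?_⟩
    have hau (j : ℕ) : a (p^[j] u) = p^[j] u := hafix _ fun m hm i => by
      simpa only [iterate_add_apply, iterate_succ_apply] using hu (m + 1) (by lia) (i + j)
    rw [Equiv.Perm.mul_apply, show a u = u from hau 0]
    apply hσfix
    · rintro ⟨l, rfl⟩
      refine (hu 0 k.succ_pos l.length).1 (a.injective ?_)
      rw [hau, iterate_length_descend he, iterate_zero_apply]
    · rintro ⟨l, rfl⟩
      exact (hu 0 k.succ_pos l.length).2 (iterate_length_descend he _ _)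

/-- The vertices `w` whose path towards the end meets that of `o` for the first time after exactly
`n` steps from both; for a base point `o` of the tree these are the vertices at distance `2 * n`
from `o` on the horosphere of `o`. -/
def confluentAt (p : V → V) (o : V) (n : ℕ) : Set V :=
  {w | IsLeast {k | p^[k] w = p^[k] o} n}

theorem confluentAt_succ (p : V → V) (o : V) (n : ℕ) :
    confluentAt p o (n + 1) = p^[n + 1] ⁻¹' {p^[n + 1] o} \ p^[n] ⁻¹' {p^[n] o} := by
  ext w
  refine and_congr_right fun _ => ⟨fun hmin hn => (hmin hn).not_gt n.lt_succ_self,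
    fun hn k hk => ?_⟩
  by_contra! hlt
  obtain ⟨d, rfl⟩ := Nat.exists_eq_add_of_le' (Nat.le_of_lt_succ hlt)
  exact hn (by simpa only [Set.mem_preimage, Set.mem_singleton_iff, iterate_add_apply]
    using congrArg p^[d] hk)

theorem ncard_confluentAt_succ [Finite ι] (he : ∀ x, p (e x) = x.1) (o : V) (n : ℕ) :
    (confluentAt p o (n + 1)).ncard = (Nat.card ι - 1) * Nat.card ι ^ n := by
  have hsub : p^[n] ⁻¹' {p^[n] o} ⊆ p^[n + 1] ⁻¹' {p^[n + 1] o} := fun w hw => by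
    simpa only [Set.mem_preimage, Set.mem_singleton_iff, iterate_succ_apply']
      using congrArg p hw
  rw [confluentAt_succ, Set.ncard_sdiff hsub (finite_iterate_fiber he n _),
    ncard_iterate_fiber he, ncard_iterate_fiber he, pow_succ', Nat.sub_one_mul]

theorem exists_commute_map_base_eq (hh : ∀ u, h (p u) = h u + 1) (he : ∀ x, p (e x) = x.1)
    {o w : V} {n : ℕ} (hw : w ∈ confluentAt p o n) :
    ∃ a : Equiv.Perm V, Function.Commute a p ∧ a o = w := by
  obtain ⟨a, hap, hao, -⟩ := exists_commute_map_eq hh he hw.1.symm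
  exact ⟨a, hap, hao⟩

theorem iterate_ne_of_mem_confluentAt (hh : ∀ u, h (p u) = h u + 1) {o w : V} {n m : ℕ}
    (hw : w ∈ confluentAt p o n) (hm : m < n) (j : ℕ) : p^[j] o ≠ p^[m] w := by
  intro hj
  have hheight := congrArg h hj
  have hmeet := congrArg h hw.1
  simp only [height_iterate hh] at hheight hmeet
  obtain rfl : j = m := by lia
  exact (hw.2 hj.symm).not_gt hm

theorem exists_commute_fix_base_map_eq (hh : ∀ u, h (p u) = h u + 1) (he : ∀ x, p (e x) = x.1)
    {o w w' : V} {n : ℕ} (hw : w ∈ confluentAt p o n) (hw' : w' ∈ confluentAt p o n) :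
    ∃ a : Equiv.Perm V, Function.Commute a p ∧ a o = o ∧ a w = w' := by
  obtain ⟨a, hap, haw, hafix⟩ := exists_commute_map_eq hh he (hw.1.trans hw'.1.symm)
  exact ⟨a, hap, hafix o fun m hm j => ⟨iterate_ne_of_mem_confluentAt hh hw hm j,
    iterate_ne_of_mem_confluentAt hh hw' hm j⟩, haw⟩

end Labelling

section Cosets

variable {Γ X : Type*} [Group Γ] [MulAction Γ X]

theorem image_mul_left_stabilizer (M : Subgroup Γ) (o : X) {g : Γ} (hg : g ∈ M) :
    (g * ·) '' {a | a ∈ M ∧ a • o = o} = {a | a ∈ M ∧ a • o = g • o} := by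
  rw [Set.image_mul_left]
  ext a
  simp only [Set.mem_preimage, Set.mem_ofPred_eq, mul_smul, inv_smul_eq_iff,
    M.mul_mem_cancel_left (M.inv_mem hg)]

theorem card_left_cosets_stabilizer (M : Subgroup Γ) (o : X) {S : Set X}
    (hS : ∀ w ∈ S, ∃ g ∈ M, g • o = w) :
    Nat.card {s : Set Γ | ∃ g, (g ∈ M ∧ g • o ∈ S) ∧ s = (g * ·) '' {a | a ∈ M ∧ a • o = o}} =
      S.ncard := by
  have hcosets : {s : Set Γ | ∃ g, (g ∈ M ∧ g • o ∈ S) ∧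
      s = (g * ·) '' {a | a ∈ M ∧ a • o = o}} = (fun w => {a | a ∈ M ∧ a • o = w}) '' S := by
    ext s
    constructor
    · rintro ⟨g, ⟨hg, hgo⟩, rfl⟩
      exact ⟨g • o, hgo, (image_mul_left_stabilizer M o hg).symm⟩
    · rintro ⟨w, hw, rfl⟩
      obtain ⟨g, hg, rfl⟩ := hS w hw
      exact ⟨g, ⟨hg, hw⟩, (image_mul_left_stabilizer M o hg).symm⟩
  have hinj : Set.InjOn (fun w => {a | a ∈ M ∧ a • o = w}) S := by
    intro w hw w' _ hww'
    obtain ⟨g, hg, rfl⟩ := hS w hw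
    exact ((Set.ext_iff.1 hww' g).1 ⟨hg, rfl⟩).2
  rw [hcosets, Nat.card_coe_set_eq, hinj.ncard_image]

end Cosets

namespace IsParentMap

variable {V ι : Type*} {G : SimpleGraph V} {v : ℕ → V} {p : V → V} {h : V → ℤ}
  {e : V × ι ≃ V} {g g' : Equiv.Perm V}

theorem neighborSet_eq (hp : IsParentMap G v p h) (u : V) :
    G.neighborSet u = insert (p u) (p ⁻¹' {u}) := by
  ext w
  simp only [SimpleGraph.mem_neighborSet, hp.adj_iff, Set.mem_insert_iff, Set.mem_preimage,
    Set.mem_singleton_iff, eq_comm]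

theorem parent_notMem_fiber (hp : IsParentMap G v p h) (u : V) : p u ∉ p ⁻¹' {u} := by
  intro hu
  have := congrArg h (hu : p (p u) = u)
  rw [hp.height_parent, hp.height_parent] at this
  lia

theorem nonempty_fiber_equiv_fin (hp : IsParentMap G v p h) {q : ℕ} {u : V}
    (hreg : (G.neighborSet u).ncard = q + 1) : Nonempty ({w // p w = u} ≃ Fin q) := by
  have hfin : (p ⁻¹' {u}).Finite := (Set.finite_of_ncard_pos (by rw [hreg]; lia)).subset
    (hp.neighborSet_eq u ▸ Set.subset_insert _ _)
  have hcard : (p ⁻¹' {u}).ncard = q := by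
    rwa [hp.neighborSet_eq, Set.ncard_insert_of_notMem (hp.parent_notMem_fiber u) hfin,
      add_left_inj] at hreg
  have : Finite {w // p w = u} := hfin.to_subtype
  exact ⟨Finite.equivFinOfCardEq hcard⟩

theorem commute (hp : IsParentMap G v p h) (hg : g ∈ Mend G v) : Function.Commute g p := by
  intro u
  have hadj := (hg.1 u (p u)).2 ((hp.adj_iff _ _).2 (Or.inl rfl))
  refine (((hp.adj_iff _ _).1 hadj).resolve_right fun hdown => ?_).symm
  have := congrArg h hdown
  rw [hp.height_parent, hp.height_apply hg, hp.height_apply hg, hp.height_parent] at this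
  lia

theorem iterate_base (hp : IsParentMap G v p h) (n : ℕ) : p^[n] (v 0) = v n := by
  induction n with
  | zero => rfl
  | succ n ih => rw [iterate_succ_apply', ih, hp.parent_ray]

theorem map_ray_eq_of_le (hp : IsParentMap G v p h) (hg : Function.Commute g p) {m n : ℕ}
    (hmn : m ≤ n) (hm : g (v m) = v m) : g (v n) = v n := by
  induction n, hmn using Nat.le_induction with
  | base => exact hm
  | succ n _ ih => rw [← hp.parent_ray, hg, ih]

theorem mem_Mend_of_commute (hp : IsParentMap G v p h) (hg : Function.Commute g p) {m : ℕ}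
    (hm : g (v m) = v m) : g ∈ Mend G v := by
  refine ⟨fun a b => ?_, m, fun n hn => hp.map_ray_eq_of_le hg hn hm⟩
  rw [hp.adj_iff, hp.adj_iff, ← hg, ← hg, g.injective.eq_iff, g.injective.eq_iff]

theorem map_ray_eq_iff (hp : IsParentMap G v p h) (hg : Function.Commute g p) (k : ℕ) :
    g (v k) = v k ↔ p^[k] (g (v 0)) = p^[k] (v 0) := by
  rw [← hg.iterate_right k, hp.iterate_base]

theorem mem_Mset_iff_isLeast (hp : IsParentMap G v p h) {n : ℕ} :
    g ∈ Mset G v n ↔ g ∈ Mend G v ∧ IsLeast {k | g (v k) = v k} n := by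
  cases n with
  | zero => exact and_congr_right fun _ => (and_iff_left fun k _ => k.zero_le).symm
  | succ n =>
    refine and_congr_right fun hg => and_congr_right fun _ => ⟨fun hn k hk => ?_,
      fun hmin hn => (hmin hn).not_gt n.lt_succ_self⟩
    by_contra! hlt
    exact hn (hp.map_ray_eq_of_le (hp.commute hg) (Nat.le_of_lt_succ hlt) hk)

theorem existsUnique_mem_Mset (hp : IsParentMap G v p h) (hg : g ∈ Mend G v) :
    ∃! n, g ∈ Mset G v n := by
  obtain ⟨N, hN⟩ := hg.2
  have hne : {k | g (v k) = v k}.Nonempty := ⟨N, hN N le_rfl⟩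
  exact ⟨_, hp.mem_Mset_iff_isLeast.2 ⟨hg, isLeast_csInf hne⟩,
    fun n hn => (hp.mem_Mset_iff_isLeast.1 hn).2.unique (isLeast_csInf hne)⟩

theorem mem_Mset_iff (hp : IsParentMap G v p h) {n : ℕ} :
    g ∈ Mset G v n ↔ g ∈ Mend G v ∧ g (v 0) ∈ confluentAt p (v 0) n := by
  rw [hp.mem_Mset_iff_isLeast]
  refine and_congr_right fun hg => ?_
  simp only [hp.map_ray_eq_iff (hp.commute hg)]
  rfl

theorem exists_mul_mul_eq_of_mem_Mset (hp : IsParentMap G v p h) (he : ∀ x, p (e x) = x.1)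
    {n : ℕ} (hg : g ∈ Mset G v n) (hg' : g' ∈ Mset G v n) :
    ∃ a ∈ Mset G v 0, ∃ b ∈ Mset G v 0, g' = a * g * b := by
  rw [hp.mem_Mset_iff] at hg hg'
  obtain ⟨a, hap, hao, hag⟩ := exists_commute_fix_base_map_eq hp.height_parent he hg.2 hg'.2
  have ha : a ∈ endCentralizer G v := hp.mem_Mend_of_commute hap hao
  have hb : (a * g)⁻¹ * g' ∈ endCentralizer G v := mul_mem (inv_mem (mul_mem ha hg.1)) hg'.1
  refine ⟨a, ⟨ha, hao⟩, (a * g)⁻¹ * g', ⟨hb, ?_⟩, (mul_inv_cancel_left _ _).symm⟩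
  rw [Equiv.Perm.mul_apply, Equiv.Perm.inv_eq_iff_eq, Equiv.Perm.mul_apply, hag]

theorem card_cosets_Mset_succ [Finite ι] (hp : IsParentMap G v p h) (he : ∀ x, p (e x) = x.1)
    (n : ℕ) :
    Nat.card {s : Set (Equiv.Perm V) |
      ∃ g ∈ Mset G v (n + 1), s = (g * ·) '' Mset G v 0} = (Nat.card ι - 1) * Nat.card ι ^ n := by
  have horbit : ∀ w ∈ confluentAt p (v 0) (n + 1), ∃ g ∈ endCentralizer G v, g • v 0 = w := by
    intro w hw
    obtain ⟨a, hap, rfl⟩ := exists_commute_map_base_eq hp.height_parent he hw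
    exact ⟨a, hp.mem_Mend_of_commute hap ((hp.map_ray_eq_iff hap _).2 hw.1), rfl⟩
  simp only [hp.mem_Mset_iff (n := n + 1)]
  rw [← ncard_confluentAt_succ he (v 0) n]
  exact card_left_cosets_stabilizer (endCentralizer G v) (v 0) horbit

end IsParentMap

/-- for the `(q+1)`-regular tree with a fixed end (given by the ray `v`)
and `o = v 0`: every element of `M` lies in exactly one `M_n`; each `M_n` is a single
`M₀`-double coset; `M_n⁻¹ = M_n`; and for `n ≥ 1` the number of left `M₀`-cosets in
`M_n` is `(q−1)q^{n−1}`. -/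
theorem stmt_18 {V : Type*} (G : SimpleGraph V) (v : ℕ → V) (q : ℕ) (hq : 2 ≤ q)
    (hconn : G.Connected) (hac : G.IsAcyclic)
    (hreg : ∀ u : V, (G.neighborSet u).ncard = q + 1)
    (hinj : Function.Injective v) (hadj : ∀ n : ℕ, G.Adj (v n) (v (n + 1))) :
    (∀ g ∈ Mend G v, ∃! n : ℕ, g ∈ Mset G v n) ∧
    (∀ n : ℕ, ∀ g ∈ Mset G v n, ∀ g' ∈ Mset G v n,
      ∃ a ∈ Mset G v 0, ∃ b ∈ Mset G v 0, g' = a * g * b) ∧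
    (∀ n : ℕ, (Mset G v n)⁻¹ = Mset G v n) ∧
    (∀ n : ℕ, 1 ≤ n →
      Nat.card ↥{s : Set (Equiv.Perm V) | ∃ g ∈ Mset G v n, s = (g * ·) '' Mset G v 0} =
        (q - 1) * q ^ (n - 1)) := by
  obtain ⟨p, hp⟩ := exists_isParentMap_busemann ⟨hconn, hac⟩ hinj hadj
  obtain ⟨e, he⟩ := exists_equiv_prod_of_fiber_equiv fun u => hp.nonempty_fiber_equiv_fin (hreg u)
  refine ⟨fun g => hp.existsUnique_mem_Mset,
    fun n g hg g' => hp.exists_mul_mul_eq_of_mem_Mset he hg, inv_Mset G v, fun n hn => ?_⟩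
  obtain ⟨n, rfl⟩ := Nat.exists_eq_add_of_le' hn
  simpa only [Nat.card_fin, Nat.add_sub_cancel] using hp.card_cosets_Mset_succ he n
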